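/- For every odd integer m > 1, the real polynomial Bohnenblust–Hille constant satisfies D_{ℝ,m} ≥ (4·3^{(m−1)/2})^{(m+1)/(2m)} / (2·(5/4)^{(m−1)/2}), and in particular D_{ℝ,m} ≥ (2·3^{1/4}/√5)^{m−1}. -/

import Mathlib

open MvPolynomial Filter

/-- The sup norm of a real polynomial in `n` variables over the cube `[-1,1]^n`. -/
noncomputable def supNorm {n : ℕ} (P : MvPolynomial (Fin n) ℝ) : ℝ :=
  sSup {y : ℝ | ∃ x : Fin n → ℝ, (∀ i, |x i| ≤ 1) ∧ y = |eval x P|}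

/-- The `ℓ_p` norm of the coefficients of a real polynomial. -/
noncomputable def lpNorm {n : ℕ} (p : ℝ) (P : MvPolynomial (Fin n) ℝ) : ℝ :=
  (∑ α ∈ P.support, |coeff α P| ^ p) ^ (1 / p)

/-- The real polynomial Bohnenblust–Hille constant `D_{ℝ,m}`. -/
noncomputable def BHconst (m : ℕ) : ℝ :=
  sInf {D : ℝ | 0 < D ∧ ∀ (n : ℕ) (P : MvPolynomial (Fin n) ℝ),
    P.IsHomogeneous m → lpNorm (2 * m / (m + 1)) P ≤ D * supNorm P}

/-- The real polynomial Bohnenblust–Hille constant `D_{ℝ,m}(n)` in a fixed number `n`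
of variables. -/
noncomputable def BHconstN (m n : ℕ) : ℝ :=
  sInf {D : ℝ | 0 < D ∧ ∀ P : MvPolynomial (Fin n) ℝ,
    P.IsHomogeneous m → lpNorm (2 * m / (m + 1)) P ≤ D * supNorm P}

/-!
The lower bound is witnessed by `(x + y) ∏ₗ q(aₗ, bₗ) + (x - y) ∏ₗ q(a'ₗ, b'ₗ)` in separate
variables, where `q(a, b) = a² + ab - b²`. On the cube `|x + y| + |x - y| ≤ 2` and `|q| ≤ 5/4`, so
with `k` factors in each product its sup norm is at most `2 (5/4)^k`, whereas its `4 · 3^k`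
coefficients are all `±1`.

As `BHconst m` is an infimum of real numbers, it is bounded below by this ratio only once some
constant is known to be admissible, which is the Bohnenblust–Hille inequality itself. The constant
`3^m (2m)^m` is enough: hypercontractivity on the Boolean cube bounds the `ℓ₂` norm of a multilinear
form's coefficients by its `L¹` norm, so that the mixed `(ℓ₁, ℓ₂)` norms of the coefficients are
controlled by the sup norm; Blei's inequality interpolates these to `ℓ_{2m/(m+1)}`; and polarization
passes from polynomials to multilinear forms.
-/

section

open Finset
open scoped BigOperators

section Walsh

variable {ι : Type*}

/-- The Rademacher function of the coordinate `x` on the Boolean cube `ι → ℤˣ`, which carries the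
uniform measure through `Finset.expect`. -/
def rademacher (x : ι) (ε : ι → ℤˣ) : ℝ := ((ε x : ℤ) : ℝ)

lemma abs_rademacher (x : ι) (ε : ι → ℤˣ) : |rademacher x ε| = 1 := by
  rcases Int.units_eq_one_or (ε x) with h | h <;> simp [rademacher, h]

lemma rademacher_sq (x : ι) (ε : ι → ℤˣ) : rademacher x ε ^ 2 = 1 := by
  rw [← sq_abs, abs_rademacher, one_pow]

/-- The polynomial function on the Boolean cube with Walsh coefficients `c S`, `S ⊆ U`. -/
def walshSum (U : Finset ι) (c : Finset ι → ℝ) (ε : ι → ℤˣ) : ℝ :=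
  ∑ S ∈ U.powerset, c S * ∏ x ∈ S, rademacher x ε

variable [DecidableEq ι]

/-- The point of the Boolean cube obtained from `ε` by changing its sign at `a`. -/
def flipSign (a : ι) (ε : ι → ℤˣ) : ι → ℤˣ := Function.update ε a (-ε a)

lemma flipSign_involutive (a : ι) : Function.Involutive (flipSign a) := fun ε => by
  simp [flipSign]

lemma rademacher_flipSign_self (a : ι) (ε : ι → ℤˣ) :
    rademacher a (flipSign a ε) = -rademacher a ε := by
  simp [rademacher, flipSign]

lemma rademacher_flipSign_of_ne {a x : ι} (h : x ≠ a) (ε : ι → ℤˣ) :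
    rademacher x (flipSign a ε) = rademacher x ε := by
  simp [rademacher, flipSign, h]

lemma walshSum_flipSign {a : ι} {U : Finset ι} (ha : a ∉ U) (c : Finset ι → ℝ) (ε : ι → ℤˣ) :
    walshSum U c (flipSign a ε) = walshSum U c ε := by
  refine sum_congr rfl fun S hS => ?_
  congr 1
  exact prod_congr rfl fun x hx =>
    rademacher_flipSign_of_ne (ne_of_mem_of_not_mem (mem_powerset.1 hS hx) ha) ε

lemma walshSum_insert {a : ι} {U : Finset ι} (ha : a ∉ U) (c : Finset ι → ℝ) (ε : ι → ℤˣ) :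
    walshSum (insert a U) c ε =
      walshSum U c ε + rademacher a ε * walshSum U (fun S => c (insert a S)) ε := by
  simp only [walshSum]
  rw [sum_powerset_insert ha, mul_sum]
  congr 1
  refine sum_congr rfl fun S hS => ?_
  rw [prod_insert (notMem_mono (mem_powerset.1 hS) ha)]
  ring

variable [Fintype ι]

lemma expect_rademacher_mul_eq_zero {a : ι} {G : (ι → ℤˣ) → ℝ}
    (hG : ∀ ε, G (flipSign a ε) = G ε) : 𝔼 ε, rademacher a ε * G ε = 0 := by
  have hflip : 𝔼 ε, rademacher a ε * G ε = 𝔼 ε, -(rademacher a ε * G ε) :=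
    Fintype.expect_equiv (flipSign_involutive a).toPerm _ _ fun ε => by
      simp [rademacher_flipSign_self, hG]
  rw [expect_neg_distrib] at hflip
  linarith

lemma expect_add_rademacher_mul_sq {a : ι} {F G : (ι → ℤˣ) → ℝ}
    (hF : ∀ ε, F (flipSign a ε) = F ε) (hG : ∀ ε, G (flipSign a ε) = G ε) :
    𝔼 ε, (F ε + rademacher a ε * G ε) ^ 2 = 𝔼 ε, F ε ^ 2 + 𝔼 ε, G ε ^ 2 := by
  have hodd : 𝔼 ε, rademacher a ε * (2 * F ε * G ε) = 0 :=
    expect_rademacher_mul_eq_zero fun ε => by rw [hF, hG]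
  rw [← add_zero (𝔼 ε, F ε ^ 2 + 𝔼 ε, G ε ^ 2), ← hodd, ← expect_add_distrib, ← expect_add_distrib]
  refine expect_congr rfl fun ε _ => ?_
  linear_combination G ε ^ 2 * rademacher_sq a ε

lemma expect_add_rademacher_mul_pow_four {a : ι} {F G : (ι → ℤˣ) → ℝ}
    (hF : ∀ ε, F (flipSign a ε) = F ε) (hG : ∀ ε, G (flipSign a ε) = G ε) :
    𝔼 ε, (F ε + rademacher a ε * G ε) ^ 4 =
      𝔼 ε, F ε ^ 4 + 6 * 𝔼 ε, F ε ^ 2 * G ε ^ 2 + 𝔼 ε, G ε ^ 4 := by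
  have hodd : 𝔼 ε, rademacher a ε * (4 * F ε ^ 3 * G ε + 4 * F ε * G ε ^ 3) = 0 :=
    expect_rademacher_mul_eq_zero fun ε => by rw [hF, hG]
  rw [mul_expect, ← add_zero (_ + 𝔼 ε, G ε ^ 4), ← hodd, ← expect_add_distrib,
    ← expect_add_distrib, ← expect_add_distrib]
  refine expect_congr rfl fun ε _ => ?_
  linear_combination (6 * F ε ^ 2 * G ε ^ 2 + 4 * rademacher a ε * F ε * G ε ^ 3 +
    (rademacher a ε ^ 2 + 1) * G ε ^ 4) * rademacher_sq a ε

theorem expect_walshSum_sq (U : Finset ι) (c : Finset ι → ℝ) :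
    𝔼 ε, walshSum U c ε ^ 2 = ∑ S ∈ U.powerset, c S ^ 2 := by
  induction U using Finset.induction_on generalizing c with
  | empty => simp [walshSum]
  | insert a U ha ih =>
    simp only [walshSum_insert ha]
    rw [expect_add_rademacher_mul_sq (walshSum_flipSign ha c) (walshSum_flipSign ha _), ih, ih,
      sum_powerset_insert ha]

lemma expect_sq_mul_sq_le {Ω : Type*} [Fintype Ω] {F G : Ω → ℝ} {A B : ℝ} (hA : 0 ≤ A) (hB : 0 ≤ B)
    (hF : 𝔼 ω, F ω ^ 4 ≤ A ^ 2) (hG : 𝔼 ω, G ω ^ 4 ≤ B ^ 2) :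
    𝔼 ω, F ω ^ 2 * G ω ^ 2 ≤ A * B := by
  have hCS := expect_mul_sq_le_sq_mul_sq univ (fun ω => F ω ^ 2) (fun ω => G ω ^ 2)
  simp only [← pow_mul, Nat.reduceMul] at hCS
  refine le_of_sq_le_sq ?_ (mul_nonneg hA hB)
  calc (𝔼 ω, F ω ^ 2 * G ω ^ 2) ^ 2 ≤ (𝔼 ω, F ω ^ 4) * 𝔼 ω, G ω ^ 4 := hCS
    _ ≤ A ^ 2 * B ^ 2 :=
      mul_le_mul hF hG (expect_nonneg fun _ _ => by positivity) (by positivity)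
    _ = (A * B) ^ 2 := (mul_pow A B 2).symm

theorem expect_walshSum_pow_four_le (U : Finset ι) {r : ℕ} {c : Finset ι → ℝ}
    (hc : ∀ S ⊆ U, r < #S → c S = 0) :
    𝔼 ε, walshSum U c ε ^ 4 ≤ 9 ^ r * (∑ S ∈ U.powerset, c S ^ 2) ^ 2 := by
  induction U using Finset.induction_on generalizing r c with
  | empty =>
    have h9 : (1 : ℝ) ≤ 9 ^ r := one_le_pow₀ (by norm_num)
    have : c ∅ ^ 4 ≤ 9 ^ r * c ∅ ^ 4 := le_mul_of_one_le_left (by positivity) h9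
    simpa [walshSum, ← pow_mul] using this
  | insert a U ha ih =>
    set d : Finset ι → ℝ := fun S => c (insert a S)
    have hF := ih fun S hS => hc S (hS.trans (subset_insert a U))
    simp only [walshSum_insert ha]
    rw [expect_add_rademacher_mul_pow_four (walshSum_flipSign ha c) (walshSum_flipSign ha d),
      sum_powerset_insert ha]
    rcases r with _ | r
    · have hd : ∀ S ∈ U.powerset, d S = 0 := fun S hS =>
        hc _ (insert_subset_insert a (mem_powerset.1 hS)) (card_pos.2 (insert_nonempty a S))
      have hG : ∀ ε, walshSum U d ε = 0 := fun ε =>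
        sum_eq_zero fun S hS => by rw [hd S hS, zero_mul]
      have hd2 : ∑ S ∈ U.powerset, d S ^ 2 = 0 := sum_eq_zero fun S hS => by simp [hd S hS]
      simpa [hG, hd2, d] using hF
    · have hG : 𝔼 ε, walshSum U d ε ^ 4 ≤ 9 ^ r * (∑ S ∈ U.powerset, d S ^ 2) ^ 2 :=
        ih fun S hS hr => hc _ (insert_subset_insert a hS) (by
          rw [card_insert_of_notMem (notMem_mono hS ha)]; lia)
      set f := ∑ S ∈ U.powerset, c S ^ 2
      set g := ∑ S ∈ U.powerset, d S ^ 2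
      have : 0 ≤ f := sum_nonneg fun _ _ => sq_nonneg _
      have : 0 ≤ g := sum_nonneg fun _ _ => sq_nonneg _
      have hnine : (9 : ℝ) ^ r = (3 ^ r) ^ 2 := by
        rw [← pow_mul', pow_mul]
        norm_num
      have hFG : 𝔼 ε, walshSum U c ε ^ 2 * walshSum U d ε ^ 2 ≤ 3 ^ (r + 1) * f * (3 ^ r * g) :=
        expect_sq_mul_sq_le (by positivity) (by positivity)
          (hF.trans_eq (by linear_combination 9 * f ^ 2 * hnine))
          (hG.trans_eq (by linear_combination g ^ 2 * hnine))
      calc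
        _ ≤ 9 ^ (r + 1) * f ^ 2 + 6 * (3 ^ (r + 1) * f * (3 ^ r * g)) + 9 ^ r * g ^ 2 := by gcongr
        _ ≤ 9 ^ (r + 1) * f ^ 2 + 6 * (3 ^ (r + 1) * f * (3 ^ r * g)) + 9 ^ (r + 1) * g ^ 2 := by
          gcongr <;> norm_num
        _ = 9 ^ (r + 1) * (f + g) ^ 2 := by linear_combination -18 * f * g * hnine

theorem sqrt_sum_sq_le_expect_abs_walshSum (U : Finset ι) {r : ℕ} {c : Finset ι → ℝ}
    (hc : ∀ S ⊆ U, r < #S → c S = 0) :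
    √(∑ S ∈ U.powerset, c S ^ 2) ≤ 3 ^ r * 𝔼 ε, |walshSum U c ε| := by
  set t := √(∑ S ∈ U.powerset, c S ^ 2)
  have hsq : ∑ S ∈ U.powerset, c S ^ 2 = t ^ 2 :=
    (Real.sq_sqrt (sum_nonneg fun _ _ => sq_nonneg _)).symm
  have h2 := expect_walshSum_sq U c
  have h4 := expect_walshSum_pow_four_le U hc
  rw [hsq] at h2 h4
  have ht0 : 0 ≤ t := Real.sqrt_nonneg _
  rcases ht0.eq_or_lt with ht | ht
  · rw [← ht]
    exact mul_nonneg (by positivity) (expect_nonneg fun _ _ => abs_nonneg _)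
  set M : ℝ := 3 ^ r * t
  have : 0 < M := by positivity
  -- The tangent-line form of `‖F‖₂³ ≤ ‖F‖₁ ‖F‖₄²`: `y⁴ - 3M²y² + 2M³y = y (y - M)² (y + 2M)`.
  have hpoint : ∀ y : ℝ, 3 * M ^ 2 * y ^ 2 ≤ y ^ 4 + 2 * M ^ 3 * |y| := fun y => by
    have : 0 ≤ |y| * (|y| - M) ^ 2 * (|y| + 2 * M) := by positivity
    rw [← sq_abs y, ← (show Even 4 by decide).pow_abs y]
    linarith
  have hmean := expect_le_expect fun ε (_ : ε ∈ univ) => hpoint (walshSum U c ε)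
  rw [expect_add_distrib, ← mul_expect, ← mul_expect, h2] at hmean
  have h9 : (9 : ℝ) ^ r * (t ^ 2) ^ 2 = M ^ 2 * t ^ 2 := by
    rw [show (9 : ℝ) = 3 ^ 2 by norm_num, ← pow_mul, mul_comm 2 r, pow_mul]; ring
  have hscaled : 2 * M ^ 2 * t * t ≤ 2 * M ^ 2 * t * (3 ^ r * 𝔼 ε, |walshSum U c ε|) := by
    linear_combination hmean + h4 + h9
  exact le_of_mul_le_mul_left hscaled (by positivity)

theorem sqrt_sum_sq_le_expect_abs_sum {τ : Type*} [Fintype τ] {r : ℕ} {S : τ → Finset ι}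
    (hS : Function.Injective S) (hr : ∀ t, #(S t) ≤ r) (c : τ → ℝ) :
    √(∑ t, c t ^ 2) ≤ 3 ^ r * 𝔼 ε, |∑ t, c t * ∏ x ∈ S t, rademacher x ε| := by
  set C : Finset ι → ℝ := Function.extend S c 0
  have hC : ∀ R, R ∉ Set.range S → C R = 0 := fun R hR => Function.extend_apply' _ _ _ hR
  have hsum : ∀ φ : ℝ → Finset ι → ℝ, (∀ R, φ 0 R = 0) →
      ∑ R ∈ univ.powerset, φ (C R) R = ∑ t, φ (c t) (S t) := fun φ hφ => by
    refine (sum_of_injOn S hS.injOn (by simp) (fun R _ hR => ?_) fun t _ => ?_).symm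
    · rw [hC R (by simpa using hR), hφ]
    · rw [show C (S t) = c t from hS.extend_apply _ _ _]
  have hdeg : ∀ R ⊆ univ, r < #R → C R = 0 := fun R _ hR =>
    hC R (by rintro ⟨t, rfl⟩; exact (hr t).not_gt hR)
  have := sqrt_sum_sq_le_expect_abs_walshSum univ hdeg
  have hwalsh : ∀ ε, walshSum univ C ε = ∑ t, c t * ∏ x ∈ S t, rademacher x ε := fun ε =>
    hsum (fun y R => y * ∏ x ∈ R, rademacher x ε) (by simp)
  simpa only [hwalsh, hsum (fun y _ => y ^ 2) (by simp)] using this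

end Walsh

section Blei

lemma sum_prod_rpow_le_prod_sum_rpow {τ K : Type*} [Fintype τ] [Fintype K] {w : K → ℝ}
    (hw : ∀ k, 0 ≤ w k) (hw1 : ∑ k, w k = 1) {z : K → τ → ℝ} (hz : ∀ k i, 0 ≤ z k i) :
    ∑ i, ∏ k, z k i ^ w k ≤ ∏ k, (∑ i, z k i) ^ w k := by
  let _ : MeasurableSpace τ := ⊤
  have hholder := ENNReal.lintegral_prod_norm_pow_le (μ := MeasureTheory.Measure.count) univ
    (f := fun k i => ENNReal.ofReal (z k i)) (fun _ _ => .of_discrete) hw1 fun k _ => hw k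
  have hsum : ∀ k, 0 ≤ ∑ i, z k i := fun k => sum_nonneg fun i _ => hz k i
  simp only [MeasureTheory.lintegral_fintype, MeasureTheory.Measure.count_singleton, mul_one,
    ← ENNReal.ofReal_sum_of_nonneg fun i _ => hz _ i,
    ENNReal.ofReal_rpow_of_nonneg (hz _ _) (hw _), ENNReal.ofReal_rpow_of_nonneg (hsum _) (hw _),
    ← ENNReal.ofReal_prod_of_nonneg fun k _ => Real.rpow_nonneg (hz k _) _,
    ← ENNReal.ofReal_prod_of_nonneg fun k _ => Real.rpow_nonneg (hsum k) _,
    ← ENNReal.ofReal_sum_of_nonneg fun i _ => prod_nonneg fun k _ => Real.rpow_nonneg (hz k i) _]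
    at hholder
  exact (ENNReal.ofReal_le_ofReal_iff <| prod_nonneg fun k _ =>
    Real.rpow_nonneg (hsum k) _).1 hholder

variable {κ ι : Type*} [Fintype κ] [DecidableEq κ] [Fintype ι] [DecidableEq ι]

/-- The `ℓ₂` norm of the slice `{i | i k = j}` of an array `c` indexed by `κ → ι`. -/
noncomputable def sliceNorm (c : (κ → ι) → ℝ) (k : κ) (j : ι) : ℝ := √(∑ i with i k = j, c i ^ 2)

lemma sliceNorm_nonneg (c : (κ → ι) → ℝ) (k : κ) (j : ι) : 0 ≤ sliceNorm c k j :=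
  Real.sqrt_nonneg _

lemma sliceNorm_sq (c : (κ → ι) → ℝ) (k : κ) (j : ι) :
    sliceNorm c k j ^ 2 = ∑ i with i k = j, c i ^ 2 :=
  Real.sq_sqrt (sum_nonneg fun _ _ => sq_nonneg _)

lemma eq_zero_of_sliceNorm_eq_zero {c : (κ → ι) → ℝ} {k : κ} {i : κ → ι}
    (h : sliceNorm c k (i k) = 0) : c i = 0 := by
  have hsum := sliceNorm_sq c k (i k)
  rw [h, zero_pow two_ne_zero, eq_comm, sum_eq_zero_iff_of_nonneg fun _ _ => sq_nonneg _] at hsum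
  exact pow_eq_zero_iff two_ne_zero |>.1 (hsum i (by simp))

lemma sum_sq_div_sliceNorm (c : (κ → ι) → ℝ) (k : κ) :
    ∑ i, c i ^ 2 / sliceNorm c k (i k) = ∑ j, sliceNorm c k j := by
  rw [← sum_fiberwise univ fun i : κ → ι => i k]
  refine sum_congr rfl fun j _ => ?_
  have hslice : ∑ i with i k = j, c i ^ 2 / sliceNorm c k (i k) =
      ∑ i with i k = j, c i ^ 2 / sliceNorm c k j :=
    sum_congr rfl fun i hi => by rw [(mem_filter.1 hi).2]
  rw [hslice, ← sum_div, ← sliceNorm_sq, pow_two, mul_self_div_self]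

lemma abs_rpow_eq_prod_sliceNorm_rpow (c : (κ → ι) → ℝ) (i : κ → ι) :
    |c i| ^ (2 * (Fintype.card κ : ℝ) / (Fintype.card κ + 1)) =
      (∏ k, sliceNorm c k (i k)) ^ (1 / ((Fintype.card κ : ℝ) + 1)) *
        ∏ k, (c i ^ 2 / sliceNorm c k (i k)) ^ (1 / ((Fintype.card κ : ℝ) + 1)) := by
  have hb : ∀ k, 0 ≤ sliceNorm c k (i k) := fun k => sliceNorm_nonneg c k (i k)
  have hdiv : ∀ k, 0 ≤ c i ^ 2 / sliceNorm c k (i k) := fun k => div_nonneg (sq_nonneg _) (hb k)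
  rw [Real.finsetProd_rpow _ _ fun k _ => hdiv k,
    ← Real.mul_rpow (prod_nonneg fun k _ => hb k) (prod_nonneg fun k _ => hdiv k),
    ← prod_mul_distrib, prod_congr rfl fun k _ => mul_div_cancel_of_imp' fun h => by
      rw [eq_zero_of_sliceNorm_eq_zero h, zero_pow two_ne_zero],
    prod_const, card_univ, ← pow_mul,
    ← (even_two_mul _).pow_abs, ← Real.rpow_natCast, ← Real.rpow_mul (abs_nonneg _)]
  congr 1
  push_cast
  ring

theorem blei_inequality (c : (κ → ι) → ℝ) :
    ∑ i, |c i| ^ (2 * (Fintype.card κ : ℝ) / (Fintype.card κ + 1)) ≤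
      ∏ k, (∑ j, sliceNorm c k j) ^ (2 / ((Fintype.card κ : ℝ) + 1)) := by
  set z : Option κ → (κ → ι) → ℝ := fun o i =>
    o.elim (∏ k, sliceNorm c k (i k)) fun k => c i ^ 2 / sliceNorm c k (i k)
  have hz : ∀ o i, 0 ≤ z o i
    | none, i => prod_nonneg fun k _ => sliceNorm_nonneg c k (i k)
    | some k, i => div_nonneg (sq_nonneg _) (sliceNorm_nonneg c k (i k))
  have hprod : ∑ i : κ → ι, ∏ k, sliceNorm c k (i k) = ∏ k, ∑ j, sliceNorm c k j := by
    rw [prod_univ_sum, Fintype.piFinset_univ]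
  have hweights : ∑ _ : Option κ, 1 / ((Fintype.card κ : ℝ) + 1) = 1 := by
    rw [sum_const, card_univ, Fintype.card_option, nsmul_eq_mul]
    push_cast
    field_simp
  have hholder := sum_prod_rpow_le_prod_sum_rpow (fun _ => by positivity) hweights hz
  simp only [Fintype.prod_option, z, Option.elim, hprod, sum_sq_div_sliceNorm] at hholder
  simp only [abs_rpow_eq_prod_sliceNorm_rpow]
  refine hholder.trans_eq ?_
  have hN : ∀ k, 0 ≤ ∑ j, sliceNorm c k j := fun k => sum_nonneg fun j _ => sliceNorm_nonneg c k j
  rw [← Real.finsetProd_rpow _ _ fun k _ => hN k, ← prod_mul_distrib]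
  refine prod_congr rfl fun k _ => ?_
  rw [← Real.mul_rpow (hN k) (hN k), ← pow_two, ← Real.rpow_natCast, ← Real.rpow_mul (hN k)]
  congr 1
  push_cast
  ring

end Blei

section MultilinearForms

lemma sum_abs_le_of_forall_abs_sum_mul_le {ι : Type*} [Fintype ι] {a : ι → ℝ} {B : ℝ}
    (h : ∀ y : ι → ℝ, (∀ j, |y j| ≤ 1) → |∑ j, y j * a j| ≤ B) : ∑ j, |a j| ≤ B := by
  have hsign := h (fun j => SignType.sign (a j)) fun j => by
    rcases SignType.sign (a j) with _ | _ | _ <;> simp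
  simp only [sign_mul_self] at hsign
  exact (le_abs_self _).trans hsign

variable {κ ι : Type*} [DecidableEq ι]

/-- The coefficient of `∏ l, y l (i l)` in the multilinear form `f`. -/
def formCoeff (f : MultilinearMap ℝ (fun _ : κ => ι → ℝ) ℝ) (i : κ → ι) : ℝ :=
  f fun l => Pi.single (i l) 1

variable [DecidableEq κ]

/-- The part of the multilinear form `f` carried by the coordinate `j` of its `k`-th argument. -/
def formSlice (f : MultilinearMap ℝ (fun _ : κ => ι → ℝ) ℝ) (k : κ) (j : ι) :
    MultilinearMap ℝ (fun _ : κ => ι → ℝ) ℝ :=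
  f.compLinearMap fun l => if l = k then .single ℝ _ j ∘ₗ .proj j else .id

lemma formSlice_apply (f : MultilinearMap ℝ (fun _ : κ => ι → ℝ) ℝ) (k : κ) (j : ι)
    (y : κ → ι → ℝ) :
    formSlice f k j y = y k j * f (Function.update y k (Pi.single j 1)) := by
  rw [← smul_eq_mul, ← f.map_update_smul]
  refine congrArg f (funext fun l => ?_)
  by_cases hl : l = k
  · subst hl
    simp [← Pi.single_smul]
  · simp [hl]

lemma formCoeff_formSlice (f : MultilinearMap ℝ (fun _ : κ => ι → ℝ) ℝ) (k : κ) (j : ι)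
    (i : κ → ι) : formCoeff (formSlice f k j) i = if i k = j then formCoeff f i else 0 := by
  rw [formCoeff, formSlice_apply]
  split_ifs with h
  · subst h
    simp [formCoeff]
  · simp [Ne.symm h]

variable [Fintype ι]

lemma sum_abs_formSlice_le {f : MultilinearMap ℝ (fun _ : κ => ι → ℝ) ℝ} {B : ℝ}
    (hf : ∀ y, (∀ l j, |y l j| ≤ 1) → |f y| ≤ B) (k : κ) {y : κ → ι → ℝ}
    (hy : ∀ l j, |y l j| ≤ 1) : ∑ j, |formSlice f k j y| ≤ B := by
  refine sum_abs_le_of_forall_abs_sum_mul_le fun s hs => ?_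
  have hsum : ∑ j, s j * formSlice f k j y = f (Function.update y k fun j => s j * y k j) := by
    conv_rhs => rw [pi_eq_sum_univ' fun j => s j * y k j, f.map_update_sum]
    refine sum_congr rfl fun j _ => ?_
    rw [f.map_update_smul, formSlice_apply, smul_eq_mul, mul_assoc]
  rw [hsum]
  refine hf _ fun l j => ?_
  by_cases hl : l = k
  · subst hl
    simpa [abs_mul] using mul_le_one₀ (hs j) (abs_nonneg _) (hy l j)
  · simpa [hl] using hy l j

variable [Fintype κ]

lemma apply_eq_sum_formCoeff (f : MultilinearMap ℝ (fun _ : κ => ι → ℝ) ℝ) (y : κ → ι → ℝ) :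
    f y = ∑ i, formCoeff f i * ∏ l, y l (i l) := by
  conv_lhs => rw [funext fun l => pi_eq_sum_univ' (y l), f.map_sum]
  refine sum_congr rfl fun i _ => ?_
  rw [f.map_smul_univ, smul_eq_mul, mul_comm]
  rfl

lemma sqrt_sum_formCoeff_sq_le (f : MultilinearMap ℝ (fun _ : κ => ι → ℝ) ℝ) :
    √(∑ i, formCoeff f i ^ 2) ≤
      3 ^ Fintype.card κ * 𝔼 ε : κ × ι → ℤˣ, |f fun l j => rademacher (l, j) ε| := by
  set graph : (κ → ι) → Finset (κ × ι) := fun i =>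
    univ.map ⟨fun l => (l, i l), fun _ _ h => congrArg Prod.fst h⟩
  have hgraph : Function.Injective graph := fun i i' h => funext fun l => by
    have hmem : (l, i l) ∈ graph i' := h ▸ mem_map_of_mem _ (mem_univ l)
    obtain ⟨l', -, hl'⟩ := mem_map.1 hmem
    obtain ⟨rfl, hi⟩ := Prod.mk.inj hl'
    exact hi.symm
  have hprod : ∀ i ε, ∏ x ∈ graph i, rademacher x ε = ∏ l, rademacher (l, i l) ε := fun i ε =>
    prod_map _ _ _
  simpa only [apply_eq_sum_formCoeff, hprod] using
    sqrt_sum_sq_le_expect_abs_sum (r := Fintype.card κ) hgraph (fun i => (card_map _).le)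
      (formCoeff f)

lemma sum_sliceNorm_formCoeff_le {f : MultilinearMap ℝ (fun _ : κ => ι → ℝ) ℝ} {B : ℝ}
    (hf : ∀ y, (∀ l j, |y l j| ≤ 1) → |f y| ≤ B) (k : κ) :
    ∑ j, sliceNorm (formCoeff f) k j ≤ 3 ^ Fintype.card κ * B := by
  have hslice : ∀ j, sliceNorm (formCoeff f) k j =
      √(∑ i, formCoeff (formSlice f k j) i ^ 2) := fun j => by
    simp [sliceNorm, formCoeff_formSlice, ite_pow, sum_filter]
  calc ∑ j, sliceNorm (formCoeff f) k j
      ≤ ∑ j, 3 ^ Fintype.card κ *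
          𝔼 ε : κ × ι → ℤˣ, |formSlice f k j fun l j => rademacher (l, j) ε| :=
        sum_le_sum fun j _ => hslice j ▸ sqrt_sum_formCoeff_sq_le _
    _ = 3 ^ Fintype.card κ *
          𝔼 ε : κ × ι → ℤˣ, ∑ j, |formSlice f k j fun l j => rademacher (l, j) ε| := by
        rw [← mul_sum, expect_sum_comm]
    _ ≤ 3 ^ Fintype.card κ * B := by
        gcongr
        exact expect_le univ_nonempty fun ε _ =>
          sum_abs_formSlice_le hf k fun l j => (abs_rademacher _ ε).le

theorem bohnenblustHille_multilinear {f : MultilinearMap ℝ (fun _ : κ => ι → ℝ) ℝ} {B : ℝ}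
    (hf : ∀ y, (∀ l j, |y l j| ≤ 1) → |f y| ≤ B) :
    ∑ i, |formCoeff f i| ^ (2 * (Fintype.card κ : ℝ) / (Fintype.card κ + 1)) ≤
      (3 ^ Fintype.card κ * B) ^ (2 * (Fintype.card κ : ℝ) / (Fintype.card κ + 1)) := by
  have hB : 0 ≤ B := (abs_nonneg _).trans (hf 0 (by simp))
  calc _ ≤ _ := blei_inequality (formCoeff f)
    _ ≤ ∏ _ : κ, (3 ^ Fintype.card κ * B) ^ (2 / ((Fintype.card κ : ℝ) + 1)) := by
        gcongr with k
        · exact fun k _ => Real.rpow_nonneg (sum_nonneg fun j _ => sliceNorm_nonneg _ k j) _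
        · exact sum_nonneg fun j _ => sliceNorm_nonneg _ k j
        · exact sum_sliceNorm_formCoeff_le hf k
    _ = _ := by
        rw [prod_const, card_univ, ← Real.rpow_mul_natCast (by positivity)]
        congr 1
        ring

end MultilinearForms

section Polarization

lemma abs_apply_diag_le {κ ι : Type*} [Fintype κ]
    {f : MultilinearMap ℝ (fun _ : κ => ι → ℝ) ℝ} {K r : ℝ}
    (hf : ∀ x : ι → ℝ, (∀ j, |x j| ≤ 1) → |f fun _ => x| ≤ K) {x : ι → ℝ}
    (hx : ∀ j, |x j| ≤ r) (hr : 0 ≤ r) : |f fun _ => x| ≤ r ^ Fintype.card κ * K := by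
  have hscale : x = r • fun j => x j / r := funext fun j =>
    (mul_div_cancel_of_imp' fun h => abs_nonpos_iff.1 (h ▸ hx j)).symm
  have hunit : ∀ j, |x j / r| ≤ 1 := fun j => by
    rw [abs_div, abs_of_nonneg hr]
    exact div_le_one_of_le₀ (hx j) hr
  rw [hscale, f.map_smul_univ (fun _ => r), prod_const, card_univ, smul_eq_mul, abs_mul, abs_pow,
    abs_of_nonneg hr]
  exact mul_le_mul_of_nonneg_left (hf _ hunit) (by positivity)

variable {κ : Type*} [Fintype κ] [DecidableEq κ]

/-- The sum of a multilinear map over all permutations of its arguments (not divided by their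
number). -/
def symmetrize {R M N : Type*} [CommSemiring R] [AddCommMonoid M] [AddCommMonoid N] [Module R M]
    [Module R N] (f : MultilinearMap R (fun _ : κ => M) N) : MultilinearMap R (fun _ : κ => M) N :=
  ∑ σ : Equiv.Perm κ, f.domDomCongr σ

lemma symmetrize_apply {R M N : Type*} [CommSemiring R] [AddCommMonoid M] [AddCommMonoid N]
    [Module R M] [Module R N] (f : MultilinearMap R (fun _ : κ => M) N) (y : κ → M) :
    symmetrize f y = ∑ σ : Equiv.Perm κ, f (y ∘ σ) := by
  rw [symmetrize, _root_.sum_apply]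
  rfl

lemma sum_neg_one_pow_card_of_forall_notMem (r : κ → κ) :
    ∑ S : Finset κ with ∀ l, r l ∉ S, (-1 : ℤ) ^ #S = if Function.Surjective r then 1 else 0 := by
  have hfilter :
      ({S : Finset κ | ∀ l, r l ∉ S} : Finset (Finset κ)) = (univ.image r)ᶜ.powerset := by
    ext S
    simp only [mem_filter_univ, mem_powerset, subset_iff, mem_compl, mem_image, mem_univ, true_and]
    grind
  rw [hfilter, sum_powerset_neg_one_pow_card]
  exact if_congr (by simp [compl_eq_empty_iff, eq_univ_iff_forall, Function.Surjective]) rfl rfl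

theorem symmetrize_eq_sum_finset {R M N : Type*} [CommSemiring R] [AddCommMonoid M]
    [AddCommGroup N] [Module R M] [Module R N] (f : MultilinearMap R (fun _ : κ => M) N)
    (y : κ → M) :
    symmetrize f y = ∑ S : Finset κ, (-1 : ℤ) ^ #S • f fun _ => ∑ k ∈ Sᶜ, y k := by
  have hexpand : ∀ S : Finset κ, (f fun _ => ∑ k ∈ Sᶜ, y k) =
      ∑ r : κ → κ, if ∀ l, r l ∉ S then f (y ∘ r) else 0 := fun S => by
    rw [f.map_sum_finset, ← sum_filter]
    exact sum_congr (by ext r; simp) fun _ _ => rfl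
  calc symmetrize f y = ∑ r : κ → κ with Function.Bijective r, f (y ∘ r) := by
        rw [symmetrize_apply]
        exact sum_bij (fun σ _ => ⇑σ) (fun σ _ => mem_filter.2 ⟨mem_univ _, σ.bijective⟩)
          (fun _ _ _ _ h => DFunLike.coe_injective h)
          (fun r hr => ⟨.ofBijective r (mem_filter.1 hr).2, mem_univ _, rfl⟩) fun _ _ => rfl
    _ = ∑ r : κ → κ, (∑ S : Finset κ with ∀ l, r l ∉ S, (-1 : ℤ) ^ #S) • f (y ∘ r) := by
        simp only [sum_filter _ fun r => f (y ∘ r), sum_neg_one_pow_card_of_forall_notMem,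
          Finite.surjective_iff_bijective, ite_smul, one_smul, zero_smul]
    _ = ∑ S : Finset κ, (-1 : ℤ) ^ #S • f fun _ => ∑ k ∈ Sᶜ, y k := by
        simp only [hexpand, sum_smul, smul_sum, sum_filter, ite_smul, smul_ite, zero_smul,
          smul_zero]
        exact sum_comm

theorem abs_symmetrize_le {ι : Type*} {f : MultilinearMap ℝ (fun _ : κ => ι → ℝ) ℝ} {K : ℝ}
    (hf : ∀ x : ι → ℝ, (∀ j, |x j| ≤ 1) → |f fun _ => x| ≤ K) {y : κ → ι → ℝ}
    (hy : ∀ l j, |y l j| ≤ 1) :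
    |symmetrize f y| ≤ (2 * Fintype.card κ) ^ Fintype.card κ * K := by
  have hsum : ∀ (S : Finset κ) (j : ι), |(∑ k ∈ S, y k) j| ≤ Fintype.card κ := fun S j => by
    rw [Finset.sum_apply]
    calc |∑ k ∈ S, y k j| ≤ ∑ k ∈ S, |y k j| := abs_sum_le_sum_abs _ _
      _ ≤ #S := by simpa using sum_le_sum fun k (_ : k ∈ S) => hy k j
      _ ≤ Fintype.card κ := by exact_mod_cast card_le_univ S
  rw [symmetrize_eq_sum_finset]
  calc |∑ S : Finset κ, (-1 : ℤ) ^ #S • f fun _ => ∑ k ∈ Sᶜ, y k|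
      ≤ ∑ S : Finset κ, |(-1 : ℤ) ^ #S • f fun _ => ∑ k ∈ Sᶜ, y k| := abs_sum_le_sum_abs _ _
    _ ≤ ∑ _ : Finset κ, (Fintype.card κ : ℝ) ^ Fintype.card κ * K := sum_le_sum fun S _ => by
        simpa [abs_mul] using abs_apply_diag_le hf (hsum Sᶜ) (Nat.cast_nonneg _)
    _ = (2 * Fintype.card κ) ^ Fintype.card κ * K := by
        simp [mul_pow, mul_assoc]

end Polarization

section PolynomialBohnenblustHille

section Norms

variable {n : ℕ} (P : MvPolynomial (Fin n) ℝ)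

lemma le_supNorm {x : Fin n → ℝ} (hx : ∀ i, |x i| ≤ 1) : |eval x P| ≤ supNorm P := by
  refine le_csSup ?_ ⟨x, hx, rfl⟩
  have hbdd := (isCompact_closedBall (0 : Fin n → ℝ) 1).bddAbove_image
    (f := fun x => |eval x P|) (MvPolynomial.continuous_eval P).abs.continuousOn
  refine hbdd.mono ?_
  rintro _ ⟨x, hx, rfl⟩
  exact ⟨x, by simpa [pi_norm_le_iff_of_nonneg] using hx, rfl⟩

lemma supNorm_nonneg : 0 ≤ supNorm P :=
  (abs_nonneg _).trans (le_supNorm P (x := 0) (by simp))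

variable {P} in
lemma supNorm_le {B : ℝ} (hB : ∀ x : Fin n → ℝ, (∀ i, |x i| ≤ 1) → |eval x P| ≤ B) :
    supNorm P ≤ B := by
  refine csSup_le ⟨_, 0, by simp, rfl⟩ ?_
  rintro _ ⟨x, hx, rfl⟩
  exact hB x hx

lemma lpNorm_sum_monomial {τ : Type*} [Fintype τ] {A : τ → Fin n →₀ ℕ}
    (hA : Function.Injective A) {c : τ → ℝ} (hc : ∀ t, c t ≠ 0) (p : ℝ) :
    lpNorm p (∑ t, monomial (A t) (c t)) = (∑ t, |c t| ^ p) ^ (1 / p) := by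
  classical
  have hcoeff : ∀ t, coeff (A t) (∑ s, monomial (A s) (c s)) = c t := fun t => by
    simp [coeff_sum, coeff_monomial, hA.eq_iff]
  have hsupport : (∑ t, monomial (A t) (c t)).support = univ.image A := by
    ext α
    rw [mem_support_iff, mem_image]
    refine ⟨fun h => ?_, ?_⟩
    · rw [coeff_sum] at h
      obtain ⟨t, ht, hα⟩ := exists_ne_zero_of_sum_ne_zero h
      exact ⟨t, ht, by_contra fun hne => hα (by rw [coeff_monomial, if_neg hne])⟩
    · rintro ⟨t, -, rfl⟩
      rw [hcoeff]
      exact hc t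
  rw [lpNorm, hsupport, sum_image hA.injOn]
  simp only [hcoeff]

end Norms

section TupleForm

/-- The exponent of the monomial `∏ l, X (i l)`. -/
noncomputable def tupleExponent {κ ι : Type*} [Fintype κ] (i : κ → ι) : ι →₀ ℕ :=
  ∑ l, Finsupp.single (i l) 1

lemma tupleExponent_comp_perm {κ ι : Type*} [Fintype κ] (i : κ → ι) (σ : Equiv.Perm κ) :
    tupleExponent (i ∘ σ) = tupleExponent i :=
  Equiv.sum_comp σ fun l => Finsupp.single (i l) 1

lemma eval_monomial_tupleExponent {κ ι R : Type*} [Fintype κ] [CommSemiring R] (i : κ → ι)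
    (a : R) (x : ι → R) : eval x (monomial (tupleExponent i) a) = a * ∏ l, x (i l) := by
  rw [tupleExponent, monomial_sum_index, map_mul, map_prod, eval_C]
  exact congrArg _ (prod_congr rfl fun l _ => eval_X (i l))

lemma exists_tupleExponent_eq {ι : Type*} (α : ι →₀ ℕ) :
    ∃ i : Fin α.degree → ι, tupleExponent i = α := by
  classical
  set L := (Finsupp.toMultiset α).toList
  have hlen : α.degree = L.length := by
    rw [Multiset.length_toList, Finsupp.card_toMultiset]
    rfl
  refine ⟨L.get ∘ finCongr hlen, Multiset.toFinsupp.symm.injective ?_⟩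
  calc Finsupp.toMultiset (tupleExponent (L.get ∘ finCongr hlen))
      = ∑ l, {L.get (finCongr hlen l)} := by simp [tupleExponent]
    _ = ∑ l, {L.get l} := Equiv.sum_comp (finCongr hlen) fun l => ({L.get l} : Multiset ι)
    _ = (L.map fun x => {x}).sum := Fin.sum_univ_fun_getElem L _
    _ = Finsupp.toMultiset α := by rw [Multiset.sum_map_toList, Multiset.sum_map_singleton]

variable {κ ι τ : Type*} [Fintype κ] [Fintype τ]

/-- The multilinear form `y ↦ ∑ t, a t * ∏ l, y l (j t l)`; on the diagonal it is the polynomial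
with coefficients `a t` at the exponents `tupleExponent (j t)`. -/
def tupleForm (a : τ → ℝ) (j : τ → κ → ι) : MultilinearMap ℝ (fun _ : κ => ι → ℝ) ℝ :=
  ∑ t, a t • (MultilinearMap.mkPiAlgebra ℝ κ ℝ).compLinearMap fun l => .proj (j t l)

lemma tupleForm_apply (a : τ → ℝ) (j : τ → κ → ι) (y : κ → ι → ℝ) :
    tupleForm a j y = ∑ t, a t * ∏ l, y l (j t l) := by
  simp [tupleForm, _root_.sum_apply]

variable [DecidableEq κ] [DecidableEq ι]

lemma formCoeff_symmetrize_tupleForm {a : τ → ℝ} {j : τ → κ → ι}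
    (hj : Function.Injective fun t => tupleExponent (j t)) (t : τ) :
    formCoeff (symmetrize (tupleForm a j)) (j t) =
      #{σ : Equiv.Perm κ | j t = j t ∘ σ} * a t := by
  have hmono : ∀ (s : τ) (σ : Equiv.Perm κ),
      ∏ l, (Pi.single (j t (σ l)) 1 : ι → ℝ) (j s l) = if j s = j t ∘ σ then 1 else 0 :=
    fun s σ => by simp [Pi.single_apply, prod_ite_zero, funext_iff]
  have hzero : ∀ s ≠ t, ∀ σ : Equiv.Perm κ, j s ≠ j t ∘ σ := fun s hs σ h =>
    hs (hj (by simp only [h, tupleExponent_comp_perm]))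
  have hterm : ∀ σ : Equiv.Perm κ, ∑ s, a s * (if j s = j t ∘ σ then 1 else 0) =
      if j t = j t ∘ σ then a t else 0 := fun σ => by
    rw [Fintype.sum_eq_single t fun s hs => by rw [if_neg (hzero s hs σ), mul_zero]]
    simp
  simp only [formCoeff, symmetrize_apply, tupleForm_apply, Function.comp_apply, hmono, hterm]
  rw [← sum_filter, sum_const, nsmul_eq_mul]

lemma abs_le_abs_formCoeff_symmetrize_tupleForm {a : τ → ℝ} {j : τ → κ → ι}
    (hj : Function.Injective fun t => tupleExponent (j t)) (t : τ) :
    |a t| ≤ |formCoeff (symmetrize (tupleForm a j)) (j t)| := by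
  have hcard : (1 : ℝ) ≤ #{σ : Equiv.Perm κ | j t = j t ∘ σ} := by
    exact_mod_cast card_pos.2 ⟨1, by simp⟩
  rw [formCoeff_symmetrize_tupleForm hj, abs_mul, Nat.abs_cast]
  exact le_mul_of_one_le_left (abs_nonneg _) hcard

end TupleForm

theorem sum_abs_rpow_le_of_abs_tupleForm_diag_le {κ ι τ : Type*} [Fintype κ] [Finite ι]
    [Fintype τ] {a : τ → ℝ} {j : τ → κ → ι} {K : ℝ}
    (hj : Function.Injective fun t => tupleExponent (j t))
    (hK : ∀ x : ι → ℝ, (∀ l, |x l| ≤ 1) → |tupleForm a j fun _ => x| ≤ K) :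
    ∑ t, |a t| ^ (2 * (Fintype.card κ : ℝ) / (Fintype.card κ + 1)) ≤
      (3 ^ Fintype.card κ * ((2 * Fintype.card κ) ^ Fintype.card κ * K)) ^
        (2 * (Fintype.card κ : ℝ) / (Fintype.card κ + 1)) := by
  classical
  have := Fintype.ofFinite ι
  set p : ℝ := 2 * (Fintype.card κ : ℝ) / (Fintype.card κ + 1)
  set F : (κ → ι) → ℝ := fun i => |formCoeff (symmetrize (tupleForm a j)) i| ^ p
  calc ∑ t, |a t| ^ p ≤ ∑ t, F (j t) := sum_le_sum fun t _ => Real.rpow_le_rpow (abs_nonneg _)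
        (abs_le_abs_formCoeff_symmetrize_tupleForm hj t) (by positivity)
    _ = ∑ i ∈ univ.map ⟨j, .of_comp (f := tupleExponent) hj⟩, F i :=
        (sum_map univ ⟨j, .of_comp (f := tupleExponent) hj⟩ F).symm
    _ ≤ ∑ i, F i := sum_le_univ_sum_of_nonneg fun i => by positivity
    _ ≤ _ := bohnenblustHille_multilinear fun y hy => abs_symmetrize_le hK hy

lemma exists_tuple_of_mem_support {ι : Type*} {m : ℕ} {P : MvPolynomial ι ℝ}
    (hP : P.IsHomogeneous m) (α : P.support) : ∃ i : Fin m → ι, tupleExponent i = α := by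
  have hα : α.1.degree = m := by_contra fun h => mem_support_iff.1 α.2 (hP.coeff_eq_zero h)
  subst hα
  exact exists_tupleExponent_eq α.1

theorem bohnenblustHille_polynomial {n m : ℕ} (hm : 0 < m) {P : MvPolynomial (Fin n) ℝ}
    (hP : P.IsHomogeneous m) :
    lpNorm (2 * m / (m + 1)) P ≤ 3 ^ m * (2 * m) ^ m * supNorm P := by
  choose j hj using exists_tuple_of_mem_support hP
  have hinj : Function.Injective fun α => tupleExponent (j α) := fun α β h =>
    Subtype.ext (by simpa only [hj] using h)
  have hdiag : ∀ x, (tupleForm (fun α : P.support => coeff α P) j fun _ => x) = eval x P := by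
    intro x
    conv_rhs => rw [P.as_sum, map_sum, ← sum_coe_sort]
    simp only [tupleForm_apply, ← eval_monomial_tupleExponent, hj]
  have hsum := sum_abs_rpow_le_of_abs_tupleForm_diag_le hinj fun x hx =>
    (hdiag x).symm ▸ le_supNorm P hx
  rw [Fintype.card_fin, sum_coe_sort P.support fun α => |coeff α P| ^ (2 * (m : ℝ) / (m + 1))]
    at hsum
  have hp : 0 < 2 * (m : ℝ) / (m + 1) := by positivity
  have hK := supNorm_nonneg P
  rw [lpNorm, one_div, Real.rpow_inv_le_iff_of_pos (sum_nonneg fun _ _ => by positivity)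
    (by positivity) hp, mul_assoc]
  exact hsum

lemma lpNorm_div_le_BHconst {n m : ℕ} (hm : 0 < m) {P : MvPolynomial (Fin n) ℝ}
    (hP : P.IsHomogeneous m) {B : ℝ} (hB : 0 < B) (hPB : supNorm P ≤ B) :
    lpNorm (2 * m / (m + 1)) P / B ≤ BHconst m := by
  refine le_csInf ⟨3 ^ m * (2 * m) ^ m, by positivity, fun n Q hQ =>
    bohnenblustHille_polynomial hm hQ⟩ ?_
  rintro D ⟨hD, h⟩
  rw [div_le_iff₀ hB]
  exact (h n P hP).trans (by gcongr)

end PolynomialBohnenblustHille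

section ExtremalPolynomial

lemma abs_sq_add_mul_sub_sq_le {a b : ℝ} (ha : |a| ≤ 1) (hb : |b| ≤ 1) :
    |a ^ 2 + a * b - b ^ 2| ≤ 5 / 4 := by
  have ha2 : a ^ 2 ≤ 1 := (sq_le_one_iff_abs_le_one a).2 ha
  have hb2 : b ^ 2 ≤ 1 := (sq_le_one_iff_abs_le_one b).2 hb
  rw [abs_le]
  constructor
  · linarith [sq_nonneg (a + b / 2)]
  · linarith [sq_nonneg (b - a / 2)]

lemma abs_add_add_abs_sub_le_two {x y : ℝ} (hx : |x| ≤ 1) (hy : |y| ≤ 1) :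
    |x + y| + |x - y| ≤ 2 := by
  grind

/-- The variables of `extremalPoly k`: two variables `inl u` for the linear factors, and for each of
the two products the variables `inr (v, l, false)` and `inr (v, l, true)` of its `l`-th factor. -/
abbrev ExtremalVar (k : ℕ) : Type := Bool ⊕ (Bool × Fin k × Bool)

variable {k : ℕ}

/-- The factor `a² + ab - b²` of `extremalPoly k` in the `l`-th pair of variables of the product
`v`. -/
noncomputable def quadFactor (v : Bool) (l : Fin k) : MvPolynomial (ExtremalVar k) ℝ :=
  X (.inr (v, l, false)) ^ 2 + X (.inr (v, l, false)) * X (.inr (v, l, true)) -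
    X (.inr (v, l, true)) ^ 2

/-- The polynomial `(x + y) ∏ l, q l + (x - y) ∏ l, q' l` of degree `2k + 1` that gives the lower
bound; the `q l` and `q' l` are copies of `a² + ab - b²` in disjoint variables. -/
noncomputable def extremalPoly (k : ℕ) : MvPolynomial (ExtremalVar k) ℝ :=
  (X (.inl false) + X (.inl true)) * ∏ l, quadFactor false l +
    (X (.inl false) - X (.inl true)) * ∏ l, quadFactor true l

lemma isHomogeneous_quadFactor (v : Bool) (l : Fin k) : (quadFactor v l).IsHomogeneous 2 :=
  (((isHomogeneous_X _ _).pow 2).add ((isHomogeneous_X _ _).mul (isHomogeneous_X _ _))).sub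
    ((isHomogeneous_X _ _).pow 2)

lemma isHomogeneous_extremalPoly (k : ℕ) : (extremalPoly k).IsHomogeneous (2 * k + 1) := by
  have hprod : ∀ v, (∏ l : Fin k, quadFactor v l).IsHomogeneous (2 * k) := fun v => by
    simpa [mul_comm] using IsHomogeneous.prod univ (quadFactor v) (fun _ => 2) fun l _ =>
      isHomogeneous_quadFactor v l
  rw [add_comm]
  exact (((isHomogeneous_X _ _).add (isHomogeneous_X _ _)).mul (hprod false)).add
    (((isHomogeneous_X _ _).sub (isHomogeneous_X _ _)).mul (hprod true))

lemma abs_eval_prod_quadFactor_le {x : ExtremalVar k → ℝ} (hx : ∀ w, |x w| ≤ 1) (v : Bool) :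
    |eval x (∏ l, quadFactor v l)| ≤ (5 / 4) ^ k := by
  rw [map_prod, abs_prod]
  refine (prod_le_prod (fun _ _ => abs_nonneg _) fun l _ => ?_).trans_eq
    (by rw [prod_const, card_univ, Fintype.card_fin])
  simpa [quadFactor] using abs_sq_add_mul_sub_sq_le (hx (.inr (v, l, false))) (hx _)

lemma abs_eval_extremalPoly_le {x : ExtremalVar k → ℝ} (hx : ∀ w, |x w| ≤ 1) :
    |eval x (extremalPoly k)| ≤ 2 * (5 / 4) ^ k := by
  set a := x (.inl false)
  set b := x (.inl true)
  calc |eval x (extremalPoly k)|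
      = |(a + b) * eval x (∏ l, quadFactor false l) +
          (a - b) * eval x (∏ l, quadFactor true l)| := by
        simp [extremalPoly, a, b]
    _ ≤ |a + b| * (5 / 4) ^ k + |a - b| * (5 / 4) ^ k := by
        refine (abs_add_le _ _).trans ?_
        rw [abs_mul, abs_mul]
        gcongr <;> exact abs_eval_prod_quadFactor_le hx _
    _ = (|a + b| + |a - b|) * (5 / 4) ^ k := (add_mul _ _ _).symm
    _ ≤ 2 * (5 / 4) ^ k := by
        gcongr
        exact abs_add_add_abs_sub_le_two (hx _) (hx _)

/-- The exponents of `a²`, `ab`, `b²` (for `c = 0, 1, 2`) in the variables `a`, `b` of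
`quadFactor v l`. -/
noncomputable def quadExponent (v : Bool) (l : Fin k) (c : Fin 3) : ExtremalVar k →₀ ℕ :=
  .single (.inr (v, l, false)) (2 - c : ℕ) + .single (.inr (v, l, true)) (c : ℕ)

/-- The coefficients of `a² + ab - b²`, in the order of `quadExponent`. -/
def quadCoeff : Fin 3 → ℝ := ![1, 1, -1]

/-- The exponent, for `t = (u, v, g)`, of the monomial of `extremalPoly k` obtained by choosing the
variable `inl u`, the product `v`, and the monomial `g l` of each factor `quadFactor v l`. -/
noncomputable def extremalExponent (t : Bool × Bool × (Fin k → Fin 3)) : ExtremalVar k →₀ ℕ :=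
  .single (.inl t.1) 1 + ∑ l, quadExponent t.2.1 l (t.2.2 l)

/-- The coefficient of `extremalPoly k` at `extremalExponent t`. -/
def extremalCoeff (t : Bool × Bool × (Fin k → Fin 3)) : ℝ :=
  (if t.1 && t.2.1 then -1 else 1) * ∏ l, quadCoeff (t.2.2 l)

lemma quadFactor_eq_sum_monomial (v : Bool) (l : Fin k) :
    quadFactor v l = ∑ c, monomial (quadExponent v l c) (quadCoeff c) := by
  simp only [quadFactor, X_pow_eq_monomial, Fin.sum_univ_three, quadExponent, quadCoeff]
  simp [X, monomial_mul, sub_eq_add_neg]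

lemma prod_quadFactor_eq_sum_monomial (v : Bool) :
    ∏ l : Fin k, quadFactor v l = ∑ g : Fin k → Fin 3,
      monomial (∑ l, quadExponent v l (g l)) (∏ l, quadCoeff (g l)) := by
  simp only [quadFactor_eq_sum_monomial, prod_univ_sum, Fintype.piFinset_univ, monomial_sum_prod]

lemma extremalPoly_eq_sum_monomial (k : ℕ) :
    extremalPoly k = ∑ t, monomial (extremalExponent t) (extremalCoeff t) := by
  have hproduct : ∀ u v,
      ∑ g : Fin k → Fin 3, monomial (extremalExponent (u, v, g)) (extremalCoeff (u, v, g)) =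
        C (if u && v then -1 else 1) * X (.inl u) * ∏ l, quadFactor v l := fun u v => by
    rw [prod_quadFactor_eq_sum_monomial, mul_sum, C_mul_X_eq_monomial]
    exact sum_congr rfl fun g _ => monomial_mul.symm
  simp only [Fintype.sum_prod_type, hproduct, Fintype.sum_bool, extremalPoly, Bool.and_false,
    Bool.and_true, Bool.false_eq_true, ↓reduceIte, C_neg, C_1]
  ring

lemma quadExponent_apply_inr (v v' : Bool) (l l' : Fin k) (c : Fin 3) (b : Bool) :
    quadExponent v l c (.inr (v', l', b)) =
      if v = v' ∧ l = l' then if b then (c : ℕ) else 2 - c else 0 := by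
  cases b <;> simp [quadExponent, Finsupp.single_apply, -Finsupp.single_tsub]

lemma extremalExponent_apply_inl (t : Bool × Bool × (Fin k → Fin 3)) (u : Bool) :
    extremalExponent t (.inl u) = if t.1 = u then 1 else 0 := by
  simp [extremalExponent, quadExponent, Finsupp.single_apply]

lemma extremalExponent_apply_inr (t : Bool × Bool × (Fin k → Fin 3)) (v : Bool) (l : Fin k)
    (b : Bool) :
    extremalExponent t (.inr (v, l, b)) =
      if t.2.1 = v then if b then (t.2.2 l : ℕ) else 2 - t.2.2 l else 0 := by
  simp [extremalExponent, quadExponent_apply_inr, ite_and]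

lemma extremalExponent_injective (hk : 0 < k) :
    Function.Injective (extremalExponent (k := k)) := by
  rintro ⟨u, v, g⟩ ⟨u', v', g'⟩ h
  have hu := DFunLike.congr_fun h (.inl u')
  have hv := fun l b => DFunLike.congr_fun h (.inr (v, l, b))
  simp only [extremalExponent_apply_inl, extremalExponent_apply_inr, if_true] at hu hv
  obtain rfl : u = u' := by simpa using hu
  obtain rfl : v' = v := by
    by_contra hne
    have hfalse := hv ⟨0, hk⟩ false
    have htrue := hv ⟨0, hk⟩ true
    simp only [if_neg hne, Bool.false_eq_true, if_true, if_false] at hfalse htrue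
    omega
  obtain rfl : g = g' := funext fun l => Fin.val_injective (by simpa using hv l true)
  rfl

lemma abs_extremalCoeff (t : Bool × Bool × (Fin k → Fin 3)) : |extremalCoeff t| = 1 := by
  have hsign : ∀ c, |quadCoeff c| = 1 := fun c => by fin_cases c <;> simp [quadCoeff]
  rw [extremalCoeff, abs_mul, abs_prod, prod_congr rfl fun l _ => hsign (t.2.2 l), prod_const_one]
  split_ifs <;> simp

theorem exists_isHomogeneous_supNorm_le_lpNorm_eq {k : ℕ} (hk : 0 < k) :
    ∃ (n : ℕ) (P : MvPolynomial (Fin n) ℝ), P.IsHomogeneous (2 * k + 1) ∧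
      supNorm P ≤ 2 * (5 / 4) ^ k ∧ ∀ p : ℝ, lpNorm p P = (4 * 3 ^ k) ^ (1 / p) := by
  set e := Fintype.equivFin (ExtremalVar k)
  refine ⟨_, rename e (extremalPoly k), (isHomogeneous_extremalPoly k).rename_isHomogeneous,
    supNorm_le fun x hx => ?_, fun p => ?_⟩
  · rw [eval_rename]
    exact abs_eval_extremalPoly_le fun w => hx (e w)
  · have hinj := (Finsupp.mapDomain_injective e.injective).comp (extremalExponent_injective hk)
    have hne : ∀ t : Bool × Bool × (Fin k → Fin 3), extremalCoeff t ≠ 0 := fun t =>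
      abs_pos.1 (by rw [abs_extremalCoeff]; exact one_pos)
    have hnorm := lpNorm_sum_monomial hinj hne p
    have hcard : Fintype.card (Bool × Bool × (Fin k → Fin 3)) = 4 * 3 ^ k := by
      simp [← mul_assoc]
    simp only [abs_extremalCoeff, Real.one_rpow, sum_const, card_univ, hcard, nsmul_one] at hnorm
    rw [extremalPoly_eq_sum_monomial, map_sum]
    simp only [rename_monomial]
    exact_mod_cast hnorm

lemma two_mul_rpow_div_sqrt_five_pow_le {s : ℝ} (hs : 1 / 2 ≤ s) (k : ℕ) :
    (2 * (3 : ℝ) ^ ((1 : ℝ) / 4) / √5) ^ (2 * k) ≤ (4 * 3 ^ k) ^ s / (2 * (5 / 4) ^ k) := by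
  have hfourth : ((3 : ℝ) ^ ((1 : ℝ) / 4)) ^ 2 = √3 := by
    rw [← Real.rpow_mul_natCast (by norm_num), Real.sqrt_eq_rpow]
    norm_num
  have hsqrt : (4 * (3 : ℝ) ^ k) ^ ((1 : ℝ) / 2) = 2 * √3 ^ k := by
    rw [Real.mul_rpow (by norm_num) (by positivity), ← Real.rpow_pow_comm (by norm_num),
      Real.sqrt_eq_rpow, show (4 : ℝ) = 2 ^ (2 : ℝ) by norm_num, ← Real.rpow_mul (by norm_num)]
    norm_num
  have hbase : (1 : ℝ) ≤ 4 * 3 ^ k := by linarith [one_le_pow₀ (n := k) (by norm_num : (1 : ℝ) ≤ 3)]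
  rw [le_div_iff₀ (by positivity)]
  calc (2 * (3 : ℝ) ^ ((1 : ℝ) / 4) / √5) ^ (2 * k) * (2 * (5 / 4) ^ k)
      = (4 * √3 / 5) ^ k * (2 * (5 / 4) ^ k) := by
        rw [pow_mul, div_pow, mul_pow, hfourth, Real.sq_sqrt (by norm_num)]
        norm_num
    _ = 2 * (4 * √3 / 5 * (5 / 4)) ^ k := by rw [mul_pow _ (5 / 4 : ℝ)]; ring
    _ = (4 * 3 ^ k) ^ ((1 : ℝ) / 2) := by rw [hsqrt]; congr 2; ring
    _ ≤ (4 * 3 ^ k) ^ s := Real.rpow_le_rpow_of_exponent_le hbase hs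

end ExtremalPolynomial

end

/-- For every odd integer `m > 1`,
`D_{ℝ,m} ≥ (4·3^{(m-1)/2})^{(m+1)/(2m)} / (2·(5/4)^{(m-1)/2})`, and in particular
`D_{ℝ,m} ≥ (2·3^{1/4}/√5)^{m-1}`. -/
theorem real_BH_lower_odd (m : ℕ) (hm : 1 < m) (ho : Odd m) :
    (4 * (3 : ℝ) ^ ((m - 1) / 2)) ^ (((m : ℝ) + 1) / (2 * m)) /
        (2 * (5 / 4 : ℝ) ^ ((m - 1) / 2)) ≤ BHconst m ∧
    (2 * (3 : ℝ) ^ ((1 : ℝ) / 4) / Real.sqrt 5) ^ (m - 1) ≤ BHconst m := by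
  obtain ⟨k, rfl⟩ := ho
  obtain ⟨n, P, hP, hsup, hlp⟩ :=
    exists_isHomogeneous_supNorm_le_lpNorm_eq (show 0 < k by omega)
  have hbound := lpNorm_div_le_BHconst (by omega) hP (by positivity) hsup
  rw [hlp, one_div_div] at hbound
  have hexp : (1 : ℝ) / 2 ≤ (((2 * k + 1 : ℕ) : ℝ) + 1) / (2 * (2 * k + 1 : ℕ)) := by
    rw [div_le_div_iff₀ (by norm_num) (by positivity)]
    linarith
  rw [Nat.add_sub_cancel, Nat.mul_div_cancel_left k two_pos]
  exact ⟨hbound, (two_mul_rpow_div_sqrt_five_pow_le hexp k).trans hbound⟩
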